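/- arXiv:2407.17237 — 5 statements merged into one kernel-verified Lean document; each statement's English description precedes it below -/
import Mathlib

section
/- Let U be a finite index set. For each u ∈ U let W_u be an N×N complex positive semidefinite Hermitian matrix and h_u ∈ ℂ^N a vector with h_u^H W_u h_u > 0, and let R_d be an N×N positive semidefinite Hermitian matrix. Define ξ_u = (h_u^H W_u h_u)^{−1/2} · (W_u h_u), W̄_u = ξ_u ξ_u^H, and R̄_d = Σ_{u∈U} W_u + R_d − Σ_{u∈U} W̄_u. Then: (i) each W̄_u is positive semidefinite of rank exactly 1; (ii) h_u^H W̄_u h_u = h_u^H W_u h_u for every u ∈ U; (iii) R̄_d is positive semidefinite; (iv) Σ_{u∈U} W̄_u + R̄_d = Σ_{u∈U} W_u + R_d. Consequently, for any σ² > 0 the SINR values γ_u = (h_u^H W_u h_u) / (Σ_{k≠u} h_u^H W_k h_u + h_u^H R_d h_u + σ²) are unchanged when (W_u, R_d) is replaced by (W̄_u, R̄_d). -/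
open Matrix
open scoped ComplexOrder

section RankOneCompression

variable {n : Type*} {A : Matrix n n ℂ}

theorem Matrix.IsHermitian.star_dotProduct_mulVec_eq_re [Fintype n] (hA : A.IsHermitian)
    (x : n → ℂ) :
    star x ⬝ᵥ (A *ᵥ x) = ((star x ⬝ᵥ (A *ᵥ x)).re : ℂ) :=
  Complex.ext rfl (by simpa using hA.im_star_dotProduct_mulVec_self x)

theorem Matrix.vecMulVec_inv_sqrt_smul_star {q : ℝ} (hq : 0 ≤ q) (v : n → ℂ) :
    vecMulVec ((Real.sqrt q)⁻¹ • v) (star ((Real.sqrt q)⁻¹ • v)) =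
      (q : ℂ)⁻¹ • vecMulVec v (star v) := by
  have hs : ((Real.sqrt q : ℝ) : ℂ)⁻¹ * ((Real.sqrt q : ℝ) : ℂ)⁻¹ = (q : ℂ)⁻¹ := by
    rw [← mul_inv, ← Complex.ofReal_mul, Real.mul_self_sqrt hq]
  ext i j
  simp only [vecMulVec_apply, Pi.smul_apply, Pi.star_apply, Complex.real_smul, star_mul',
    smul_apply, smul_eq_mul, ← hs, Complex.ofReal_inv, star_inv₀, Complex.star_def,
    Complex.conj_ofReal]
  ring

/-- Subtracting the normalized rank-one compression along `x` preserves positivity: the result is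
the congruence `Pᴴ A P` with `P = 1 - q⁻¹ x (A x)ᴴ`. -/
theorem Matrix.PosSemidef.sub_inv_smul_vecMulVec [Fintype n] (hA : A.PosSemidef) {x : n → ℂ}
    {q : ℝ} (hq : q ≠ 0) (hx : star x ⬝ᵥ (A *ᵥ x) = q) :
    (A - (q : ℂ)⁻¹ • vecMulVec (A *ᵥ x) (star (A *ᵥ x))).PosSemidef := by
  classical
  have hxA : star x ᵥ* A = star (A *ᵥ x) := by
    rw [star_mulVec, hA.isHermitian.eq]
  have hq' : (q : ℂ) ≠ 0 := by exact_mod_cast hq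
  convert hA.conjTranspose_mul_mul_same (1 - (q : ℂ)⁻¹ • vecMulVec x (star (A *ᵥ x))) using 1
  have hx' : star (A *ᵥ x) ⬝ᵥ x = q := by
    rw [← hxA, ← dotProduct_mulVec, hx]
  simp only [conjTranspose_sub, conjTranspose_one, conjTranspose_smul, conjTranspose_vecMulVec,
    star_star, star_inv₀, Complex.star_def, Complex.conj_ofReal, sub_mul, mul_sub, one_mul,
    mul_one, smul_mul_assoc, mul_smul_comm, mul_vecMulVec, vecMulVec_mul, hxA,
    hx', vecMulVec_mulVec]
  ext i j
  simp [vecMulVec_apply]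
  field_simp
  ring

end RankOneCompression

/-- Proposition 3: rank-one reconstruction preserving quadratic forms, total
covariance, positive semidefiniteness and hence all SINR values. -/
theorem stmt2 {N : ℕ} {ι : Type} [Fintype ι] [DecidableEq ι]
    (W : ι → Matrix (Fin N) (Fin N) ℂ) (h : ι → Fin N → ℂ)
    (Rd : Matrix (Fin N) (Fin N) ℂ)
    (hW : ∀ u, (W u).PosSemidef) (hRd : Rd.PosSemidef)
    (hpos : ∀ u, 0 < (star (h u) ⬝ᵥ ((W u) *ᵥ (h u))).re)
    (ξ : ι → Fin N → ℂ) (Wb : ι → Matrix (Fin N) (Fin N) ℂ)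
    (Rb : Matrix (Fin N) (Fin N) ℂ)
    (hξ : ∀ u, ξ u =
      ((Real.sqrt ((star (h u) ⬝ᵥ ((W u) *ᵥ (h u))).re))⁻¹ : ℝ) • ((W u) *ᵥ (h u)))
    (hWb : ∀ u, Wb u = Matrix.vecMulVec (ξ u) (star (ξ u)))
    (hRb : Rb = (∑ u, W u) + Rd - ∑ u, Wb u) :
    (∀ u, (Wb u).PosSemidef ∧ (Wb u).rank = 1) ∧
    (∀ u, star (h u) ⬝ᵥ ((Wb u) *ᵥ (h u)) = star (h u) ⬝ᵥ ((W u) *ᵥ (h u))) ∧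
    Rb.PosSemidef ∧
    ((∑ u, Wb u) + Rb = (∑ u, W u) + Rd) ∧
    (∀ σ2 : ℝ, 0 < σ2 → ∀ u,
      (star (h u) ⬝ᵥ ((Wb u) *ᵥ (h u))) /
        ((∑ k ∈ Finset.univ.erase u, star (h u) ⬝ᵥ ((Wb k) *ᵥ (h u)))
          + star (h u) ⬝ᵥ (Rb *ᵥ (h u)) + (σ2 : ℂ))
      = (star (h u) ⬝ᵥ ((W u) *ᵥ (h u))) /
        ((∑ k ∈ Finset.univ.erase u, star (h u) ⬝ᵥ ((W k) *ᵥ (h u)))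
          + star (h u) ⬝ᵥ (Rd *ᵥ (h u)) + (σ2 : ℂ))) := by
  have hq : ∀ u, star (h u) ⬝ᵥ (W u *ᵥ h u) = ((star (h u) ⬝ᵥ (W u *ᵥ h u)).re : ℂ) :=
    fun u => (hW u).isHermitian.star_dotProduct_mulVec_eq_re (h u)
  have hWb' : ∀ u, Wb u = ((star (h u) ⬝ᵥ (W u *ᵥ h u)).re : ℂ)⁻¹ •
      vecMulVec (W u *ᵥ h u) (star (W u *ᵥ h u)) := fun u => by
    rw [hWb, hξ, vecMulVec_inv_sqrt_smul_star (hpos u).le]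
  have hquad : ∀ u, star (h u) ⬝ᵥ (Wb u *ᵥ h u) = star (h u) ⬝ᵥ (W u *ᵥ h u) := fun u => by
    have hne : star (h u) ⬝ᵥ (W u *ᵥ h u) ≠ 0 := fun h0 => (hpos u).ne' (by simp [h0])
    have hstar : star (W u *ᵥ h u) ⬝ᵥ h u = star (h u) ⬝ᵥ (W u *ᵥ h u) := by
      rw [star_mulVec, (hW u).isHermitian.eq, ← dotProduct_mulVec]
    rw [hWb', ← hq, smul_mulVec, vecMulVec_mulVec, hstar, dotProduct_smul, dotProduct_smul]
    simp [hne]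
  have hsum : (∑ u, Wb u) + Rb = (∑ u, W u) + Rd := by rw [hRb]; abel
  refine ⟨fun u => ⟨hWb u ▸ posSemidef_vecMulVec_self_star (ξ u), ?_⟩, hquad, ?_, hsum, ?_⟩
  · refine le_antisymm (hWb u ▸ rank_vecMulVec_le _ _) (Nat.one_le_iff_ne_zero.2 fun h0 => ?_)
    have hzero : (Wb u).mulVecLin = 0 :=
      LinearMap.range_eq_bot.1 (Submodule.finrank_eq_zero.1 h0)
    have hker : Wb u *ᵥ h u = 0 := LinearMap.congr_fun hzero (h u)
    exact (hpos u).ne' (by rw [← hquad u, hker, dotProduct_zero, Complex.zero_re])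
  · have hRb' : Rb = ∑ u, (W u - Wb u) + Rd := by
      rw [hRb, Finset.sum_sub_distrib]; abel
    rw [hRb']
    refine (posSemidef_sum _ fun u _ => ?_).add hRd
    rw [hWb']
    exact (hW u).sub_inv_smul_vecMulVec (hpos u).ne' (hq u)
  · intro σ2 _ u
    have htot := congrArg (fun M => star (h u) ⬝ᵥ (M *ᵥ h u)) hsum
    simp only [add_mulVec, sum_mulVec, dotProduct_add, dotProduct_sum] at htot
    rw [← Finset.add_sum_erase _ _ (Finset.mem_univ u),
      ← Finset.add_sum_erase _ _ (Finset.mem_univ u), hquad u, add_assoc, add_assoc] at htot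
    rw [hquad u, add_left_cancel htot]
end

section
/- Let D be a 3×3 real symmetric positive semidefinite matrix with entries D_{ij} (1-indexed). Then 2 D_{12} D_{13} D_{23} ≤ D_{22} D_{13}² + D_{33} D_{12}². -/
open Matrix

/-- For a 3×3 real symmetric positive semidefinite matrix `D`,
`2 D₁₂ D₁₃ D₂₃ ≤ D₂₂ D₁₃² + D₃₃ D₁₂²`. -/
theorem stmt6 (D : Matrix (Fin 3) (Fin 3) ℝ) (hD : D.PosSemidef) :
    2 * D 0 1 * D 0 2 * D 1 2 ≤ D 1 1 * (D 0 2) ^ 2 + D 2 2 * (D 0 1) ^ 2 := by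
  have hsymm : D 2 1 = D 1 2 := by simpa using hD.isHermitian.apply 1 2
  have hquad := hD.dotProduct_mulVec_nonneg ![0, D 0 2, -D 0 1]
  simp [dotProduct, mulVec, Fin.sum_univ_three, hsymm] at hquad
  linarith
end

section
/- Fix integers N, K, U ≥ 1, nonzero vectors h_1,…,h_U ∈ ℂ^N and v_1,…,v_K ∈ ℂ^N, reals Γ_u > 0 for each u, σ² > 0, and P_T > 0. Call a tuple (W_1,…,W_U, R_d) of N×N positive semidefinite Hermitian matrices feasible if, writing R_X = Σ_{u=1}^U W_u + R_d: (a) h_u^H W_u h_u / Γ_u − Σ_{k≠u} h_u^H W_k h_u − h_u^H R_d h_u − σ² ≥ 0 for every u; and (b) Σ_{u=1}^U tr(W_u) + tr(R_d) ≤ P_T. Define the objective μ(W_1,…,W_U,R_d) = min_{k=1,…,K} conj(v_k)^H R_X conj(v_k), where conj(v_k) denotes the entrywise complex conjugate of v_k. Suppose (W_1,…,W_U,R_d) is feasible, has strictly positive objective value, and is globally optimal, i.e., no feasible tuple attains a strictly larger objective. Let P be the matrix of the orthogonal projection of ℂ^N onto span{h_1,…,h_U, conj(v_1),…,conj(v_K)}.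 Then W_u = P W_u P for every u and R_d = P R_d P; in particular rank(W_u) ≤ K + U and rank(R_d) ≤ K + U. -/
open Matrix
open scoped ComplexOrder

noncomputable section

/-- Feasibility for the SINR-constrained min-illumination-power maximization SDR:
all matrices PSD, SINR constraints (a) and the sum-power constraint (b). -/
def Feasible {N U : ℕ} (h : Fin U → Fin N → ℂ) (Γ : Fin U → ℝ) (σ2 PT : ℝ)
    (W : Fin U → Matrix (Fin N) (Fin N) ℂ) (Rd : Matrix (Fin N) (Fin N) ℂ) : Prop :=
  (∀ u, (W u).PosSemidef) ∧ Rd.PosSemidef ∧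
  (∀ u, (star (h u) ⬝ᵥ ((W u) *ᵥ (h u))).re / Γ u
      - (∑ k ∈ Finset.univ.erase u, (star (h u) ⬝ᵥ ((W k) *ᵥ (h u))).re)
      - (star (h u) ⬝ᵥ (Rd *ᵥ (h u))).re - σ2 ≥ 0) ∧
  (∑ u, (W u).trace.re) + Rd.trace.re ≤ PT

/-- The objective: the minimum over targets of the illumination power
`conj(v_k)ᴴ R_X conj(v_k)` with `R_X = ∑ u W_u + R_d`. -/
def Objective {N K U : ℕ} (v : Fin K → Fin N → ℂ)
    (W : Fin U → Matrix (Fin N) (Fin N) ℂ) (Rd : Matrix (Fin N) (Fin N) ℂ) : ℝ :=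
  ⨅ k : Fin K,
    (star (star (v k)) ⬝ᵥ (((∑ u, W u) + Rd) *ᵥ (star (v k)))).re

section Compression

variable {n : Type*} {P A : Matrix n n ℂ}

/-- The quadratic form of a scaled compression `t • P A P` at a vector fixed by `P`. -/
lemma re_dotProduct_smul_compression_mulVec [Fintype n] (hP1 : Pᴴ = P) (A : Matrix n n ℂ)
    (t : ℝ) {x : n → ℂ} (hx : P *ᵥ x = x) :
    (star x ⬝ᵥ (((t : ℂ) • (P * A * P)) *ᵥ x)).re = t * (star x ⬝ᵥ (A *ᵥ x)).re := by
  have hx' : star x ᵥ* P = star x := by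
    conv_rhs => rw [← hx, star_mulVec, hP1]
  rw [smul_mulVec, dotProduct_smul, ← mulVec_mulVec, hx, ← mulVec_mulVec,
    dotProduct_mulVec, hx', smul_eq_mul, Complex.re_ofReal_mul]

/-- Splitting of the trace along an orthogonal projection and its complement. -/
lemma trace_compression_add [Fintype n] [DecidableEq n] (hP2 : P * P = P) (A : Matrix n n ℂ) :
    (P * A * P).trace + ((1 - P) * A * (1 - P)).trace = A.trace := by
  have hQ : (1 - P) * (1 - P) = 1 - P := by
    simp [mul_sub, sub_mul, hP2]
  rw [trace_mul_comm, ← mul_assoc, hP2, trace_mul_comm ((1 - P) * A), ← mul_assoc, hQ,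
    ← trace_add, ← add_mul, add_sub_cancel, one_mul]

lemma posSemidef_compression [Fintype n] (hP1 : Pᴴ = P) (hA : A.PosSemidef) :
    (P * A * P).PosSemidef := by
  simpa only [hP1] using hA.mul_mul_conjTranspose_same P

lemma conjTranspose_one_sub [DecidableEq n] (hP1 : Pᴴ = P) : (1 - P)ᴴ = 1 - P := by
  rw [conjTranspose_sub, conjTranspose_one, hP1]

lemma trace_compression_re_nonneg [Fintype n] (hP1 : Pᴴ = P) (hA : A.PosSemidef) :
    0 ≤ (P * A * P).trace.re :=
  (Complex.nonneg_iff.mp (posSemidef_compression hP1 hA).trace_nonneg).1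

/-- A positive semidefinite matrix whose complementary compression has nonpositive trace is
supported on the range of the projection. -/
lemma eq_compression_of_trace_re_nonpos [Fintype n] [DecidableEq n] (hP1 : Pᴴ = P)
    (hA : A.PosSemidef) (h0 : ((1 - P) * A * (1 - P)).trace.re ≤ 0) : A = P * A * P := by
  have hQ1 := conjTranspose_one_sub hP1
  have hQA := posSemidef_compression hQ1 hA
  have hzero : (1 - P) * A * (1 - P) = 0 := by
    rw [← hQA.trace_eq_zero_iff]
    have hnn := Complex.nonneg_iff.mp hQA.trace_nonneg
    exact Complex.ext (le_antisymm h0 hnn.1) hnn.2.symm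
  have hAQ : A * (1 - P) = 0 := by
    refine Matrix.ext_of_mulVec_single fun i => ?_
    rw [zero_mulVec, ← mulVec_mulVec, ← hA.dotProduct_mulVec_zero_iff, star_mulVec, hQ1,
      ← dotProduct_mulVec, mulVec_mulVec, mulVec_mulVec, hzero, zero_mulVec,
      dotProduct_zero]
  have hAP : A = A * P := by
    rwa [mul_sub, mul_one, sub_eq_zero] at hAQ
  have hPA : A = P * A := by
    have := congrArg conjTranspose hAP
    rwa [conjTranspose_mul, hP1, hA.isHermitian.eq] at this
  rw [← hPA, ← hAP]

end Compression

/-- A matrix whose range lies in the span of two finite families has rank at most the total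
number of vectors in them. -/
lemma rank_le_of_mulVec_mem_span {n : Type*} [Fintype n] {K U : ℕ} {P : Matrix n n ℂ}
    {a : Fin U → n → ℂ} {b : Fin K → n → ℂ}
    (hP : ∀ x, P *ᵥ x ∈ Submodule.span ℂ (Set.range a ∪ Set.range b)) : P.rank ≤ K + U := by
  have hle : P.rank ≤ Module.finrank ℂ (Submodule.span ℂ (Set.range a ∪ Set.range b)) := by
    refine Submodule.finrank_mono ?_
    rintro _ ⟨x, rfl⟩
    exact hP x
  rw [← Set.Sum.elim_range] at hle
  refine hle.trans ((finrank_range_le_card (R := ℂ) (Sum.elim a b)).trans ?_)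
  simp [add_comm]

section ScaledCompression

variable {N K U : ℕ} {h : Fin U → Fin N → ℂ} {v : Fin K → Fin N → ℂ} {Γ : Fin U → ℝ}
  {σ2 PT : ℝ} {W : Fin U → Matrix (Fin N) (Fin N) ℂ} {Rd P : Matrix (Fin N) (Fin N) ℂ}

lemma objective_smul_compression (hP1 : Pᴴ = P) (hv : ∀ k, P *ᵥ star (v k) = star (v k))
    {t : ℝ} (ht : 0 ≤ t) :
    Objective v (fun u => (t : ℂ) • (P * W u * P)) ((t : ℂ) • (P * Rd * P))
      = t * Objective v W Rd := by
  have hsum : (∑ u, (t : ℂ) • (P * W u * P)) + (t : ℂ) • (P * Rd * P)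
      = (t : ℂ) • (P * ((∑ u, W u) + Rd) * P) := by
    rw [← Finset.smul_sum, ← Finset.sum_mul, ← Finset.mul_sum, ← smul_add, ← add_mul, ← mul_add]
  unfold Objective
  rw [Real.mul_iInf_of_nonneg ht, hsum]
  exact iInf_congr fun k => re_dotProduct_smul_compression_mulVec hP1 _ t (hv k)

lemma Feasible.smul_compression (hfeas : Feasible h Γ σ2 PT W Rd) (hσ : 0 ≤ σ2)
    (hP1 : Pᴴ = P) (hh : ∀ u, P *ᵥ h u = h u) {t : ℝ} (ht : 1 ≤ t)
    (htr : t * ((∑ u, (P * W u * P).trace.re) + (P * Rd * P).trace.re) ≤ PT) :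
    Feasible h Γ σ2 PT (fun u => (t : ℂ) • (P * W u * P)) ((t : ℂ) • (P * Rd * P)) := by
  obtain ⟨hW, hR, hsinr, -⟩ := hfeas
  have ht0 : (0 : ℂ) ≤ (t : ℂ) := Complex.zero_le_real.mpr (by linarith)
  refine ⟨fun u => (posSemidef_compression hP1 (hW u)).smul ht0,
    (posSemidef_compression hP1 hR).smul ht0, fun u => ?_, ?_⟩
  · simp only [re_dotProduct_smul_compression_mulVec hP1 _ t (hh u)]
    rw [← Finset.mul_sum, mul_div_assoc]
    nlinarith [hsinr u]
  · simpa only [trace_smul, smul_eq_mul, Complex.re_ofReal_mul, ← Finset.mul_sum, ← mul_add]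
      using htr

end ScaledCompression

/-- Proposition 4: every globally optimal solution of the SDR of the SINR-constrained
minimum-target-illumination-power maximization problem is supported on the subspace
spanned by the communication channels and the conjugated steering vectors. -/
theorem stmt8 {N K U : ℕ} (hK : 1 ≤ K) (hU : 1 ≤ U) (hN : 1 ≤ N)
    (h : Fin U → Fin N → ℂ) (v : Fin K → Fin N → ℂ)
    (hh : ∀ u, h u ≠ 0) (hv : ∀ k, v k ≠ 0)
    (Γ : Fin U → ℝ) (hΓ : ∀ u, 0 < Γ u) (σ2 PT : ℝ) (hσ : 0 < σ2) (hPT : 0 < PT)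
    (W : Fin U → Matrix (Fin N) (Fin N) ℂ) (Rd : Matrix (Fin N) (Fin N) ℂ)
    (hfeas : Feasible h Γ σ2 PT W Rd)
    (hpos : 0 < Objective v W Rd)
    (hopt : ∀ (W' : Fin U → Matrix (Fin N) (Fin N) ℂ)
        (Rd' : Matrix (Fin N) (Fin N) ℂ),
        Feasible h Γ σ2 PT W' Rd' → Objective v W' Rd' ≤ Objective v W Rd)
    (P : Matrix (Fin N) (Fin N) ℂ)
    (hP1 : Pᴴ = P) (hP2 : P * P = P)
    (hPrange : ∀ x : Fin N → ℂ,
      P *ᵥ x ∈ Submodule.span ℂ (Set.range h ∪ Set.range (fun k => star (v k))))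
    (hPfix : ∀ x ∈ Submodule.span ℂ (Set.range h ∪ Set.range (fun k => star (v k))),
      P *ᵥ x = x) :
    (∀ u, W u = P * (W u) * P) ∧ Rd = P * Rd * P ∧
    (∀ u, (W u).rank ≤ K + U) ∧ Rd.rank ≤ K + U := by
  have hfixh : ∀ u, P *ᵥ h u = h u := fun u =>
    hPfix _ (Submodule.subset_span (Or.inl ⟨u, rfl⟩))
  have hfixv : ∀ k, P *ᵥ star (v k) = star (v k) := fun k =>
    hPfix _ (Submodule.subset_span (Or.inr ⟨k, rfl⟩))
  obtain ⟨hW, hR, -, hpow⟩ := id hfeas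
  have hQ1 := conjTranspose_one_sub hP1
  have hWnn := fun u => trace_compression_re_nonneg hQ1 (hW u)
  have hRnn := trace_compression_re_nonneg hQ1 hR
  have hsumnn := Finset.sum_nonneg fun u (_ : u ∈ Finset.univ) => hWnn u
  have hsplit : ∀ A : Matrix (Fin N) (Fin N) ℂ,
      A.trace.re = (P * A * P).trace.re + ((1 - P) * A * (1 - P)).trace.re := fun A => by
    rw [← Complex.add_re, trace_compression_add hP2]
  -- the power wasted outside the range of `P`
  set δ : ℝ := (∑ u, ((1 - P) * W u * (1 - P)).trace.re)
    + ((1 - P) * Rd * (1 - P)).trace.re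
  have hδ0 : δ ≤ 0 := by
    by_contra! hδpos
    have hpow' : (∑ u, (P * W u * P).trace.re) + (P * Rd * P).trace.re ≤ PT - δ := by
      rw [hsplit Rd, Finset.sum_congr rfl fun u _ => hsplit (W u), Finset.sum_add_distrib] at hpow
      linarith
    have ht : 0 < δ / PT := div_pos hδpos hPT
    have htr : (1 + δ / PT) * ((∑ u, (P * W u * P).trace.re) + (P * Rd * P).trace.re) ≤ PT := by
      refine (mul_le_mul_of_nonneg_left hpow' (by linarith)).trans ?_
      have hmul : δ / PT * PT = δ := div_mul_cancel₀ _ hPT.ne'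
      nlinarith
    have hle := hopt _ _ (hfeas.smul_compression hσ.le hP1 hfixh (by linarith) htr)
    rw [objective_smul_compression hP1 hfixv (by linarith)] at hle
    nlinarith
  have hWeq : ∀ u, W u = P * W u * P := fun u => by
    refine eq_compression_of_trace_re_nonpos hP1 (hW u) ?_
    have := Finset.single_le_sum (fun u _ => hWnn u) (Finset.mem_univ u)
    linarith
  have hReq : Rd = P * Rd * P :=
    eq_compression_of_trace_re_nonpos hP1 hR (by linarith)
  have hrank : ∀ A : Matrix (Fin N) (Fin N) ℂ, A = P * A * P → A.rank ≤ K + U := fun A hA => by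
    rw [hA]
    exact (rank_mul_le_right _ _).trans (rank_le_of_mulVec_mem_span hPrange)
  exact ⟨hWeq, hReq, fun u => hrank _ (hWeq u), hrank _ hReq⟩

end
end

section
/- Consider N transmit antennas at positions p_n = (x_n, y_n, z_n) ∈ ℝ³, none coinciding with the target location t = (0, t_y, t_z), whose first coordinate is zero. Suppose there is an involution σ of {1,…,N} (σ∘σ = id) with p_{σ(n)} = (−x_n, y_n, z_n) for all n, i.e., the array is mirror-symmetric in the x-coordinate. Let r_n = ‖p_n − t‖ > 0, and for real constants λ > 0 and ν define the near-field steering vector v ∈ ℂ^N by v_n = (λ/(4π r_n)) e^{−i ν r_n} and its derivative with respect to the target x-coordinate v̇ₓ ∈ ℂ^N by (v̇ₓ)_n = v_n (x_n/r_n² + i ν x_n/r_n). Then v^H v̇ₓ = Σ_{n=1}^N conj(v_n) (v̇ₓ)_n = 0. -/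
/-- Orthogonality `vᴴ v̇ₓ = 0` (eq. (54)) for a near-field steering vector of an
array that is mirror-symmetric in the x-coordinate, with the target on the
symmetry plane `x = 0`. -/
theorem stmt13 {N : ℕ} (x y z : Fin N → ℝ) (ty tz lam ν : ℝ) (hlam : 0 < lam)
    (r : Fin N → ℝ)
    (hr : ∀ n, r n = Real.sqrt (x n ^ 2 + (y n - ty) ^ 2 + (z n - tz) ^ 2))
    (hrpos : ∀ n, 0 < r n)
    (σ : Equiv.Perm (Fin N)) (hσ : ∀ n, σ (σ n) = n)
    (hx : ∀ n, x (σ n) = - x n) (hy : ∀ n, y (σ n) = y n)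
    (hz : ∀ n, z (σ n) = z n)
    (v vdx : Fin N → ℂ)
    (hv : ∀ n, v n = ((lam / (4 * Real.pi * r n) : ℝ) : ℂ)
        * Complex.exp (-Complex.I * ((ν * r n : ℝ) : ℂ)))
    (hvdx : ∀ n, vdx n = v n * (((x n / (r n) ^ 2 : ℝ) : ℂ)
        + Complex.I * ((ν * x n / r n : ℝ) : ℂ))) :
    ∑ n, star (v n) * vdx n = 0 := by
  have hrσ : ∀ n, r (σ n) = r n := fun n => by
    rw [hr, hr, hx, hy, hz, neg_sq]
  have hvσ : ∀ n, v (σ n) = v n := fun n => by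
    rw [hv, hv, hrσ]
  have hodd : ∀ n, star (v (σ n)) * vdx (σ n) = -(star (v n) * vdx n) := fun n => by
    rw [hvdx, hvdx, hvσ, hrσ, hx]
    push_cast
    ring
  have hsum : ∑ n, star (v n) * vdx n = -∑ n, star (v n) * vdx n := by
    rw [← Finset.sum_neg_distrib, ← Equiv.sum_comp σ]
    exact Finset.sum_congr rfl fun n _ => hodd n
  exact self_eq_neg.mp hsum
end

section
/- Consider N transmit antennas at positions p_n = (x_n, y_n, z_n) ∈ ℝ³, none coinciding with the target location t = (0, t_y, t_z), whose first coordinate is zero. Suppose there is an involution σ of {1,…,N} (σ∘σ = id) with p_{σ(n)} = (−x_n, y_n, z_n) for all n. Let r_n = ‖p_n − t‖ > 0, and for real constants λ > 0 and ν define v_n = (λ/(4π r_n)) e^{−i ν r_n}, (v̇ₓ)_n = v_n (x_n/r_n² + i ν x_n/r_n), and (v̇_y)_n = v_n ((y_n − t_y)/r_n² + i ν (y_n − t_y)/r_n). Then v̇ₓ^H v̇_y = Σ_{n=1}^N conj((v̇ₓ)_n) (v̇_y)_n = 0. -/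
/-- Cross-orthogonality `v̇ₓᴴ v̇_y = 0` (eq. (55)) for a near-field steering vector of
an array that is mirror-symmetric in the x-coordinate, with the target on the
symmetry plane `x = 0`. -/
theorem stmt14 {N : ℕ} (x y z : Fin N → ℝ) (ty tz lam ν : ℝ) (hlam : 0 < lam)
    (r : Fin N → ℝ)
    (hr : ∀ n, r n = Real.sqrt (x n ^ 2 + (y n - ty) ^ 2 + (z n - tz) ^ 2))
    (hrpos : ∀ n, 0 < r n)
    (σ : Equiv.Perm (Fin N)) (hσ : ∀ n, σ (σ n) = n)
    (hx : ∀ n, x (σ n) = - x n) (hy : ∀ n, y (σ n) = y n)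
    (hz : ∀ n, z (σ n) = z n)
    (v vdx vdy : Fin N → ℂ)
    (hv : ∀ n, v n = ((lam / (4 * Real.pi * r n) : ℝ) : ℂ)
        * Complex.exp (-Complex.I * ((ν * r n : ℝ) : ℂ)))
    (hvdx : ∀ n, vdx n = v n * (((x n / (r n) ^ 2 : ℝ) : ℂ)
        + Complex.I * ((ν * x n / r n : ℝ) : ℂ)))
    (hvdy : ∀ n, vdy n = v n * ((((y n - ty) / (r n) ^ 2 : ℝ) : ℂ)
        + Complex.I * ((ν * (y n - ty) / r n : ℝ) : ℂ))) :
    ∑ n, star (vdx n) * vdy n = 0 := by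
  have hrσ (n) : r (σ n) = r n := by rw [hr, hr, hx, hy, hz, neg_sq]
  have hvσ (n) : v (σ n) = v n := by rw [hv, hv, hrσ]
  have hvdxσ (n) : vdx (σ n) = -vdx n := by
    rw [hvdx, hvdx, hvσ, hrσ, hx]
    push_cast
    ring
  have hvdyσ (n) : vdy (σ n) = vdy n := by rw [hvdy, hvdy, hvσ, hrσ, hy]
  rw [← self_eq_neg, ← Finset.sum_neg_distrib]
  calc ∑ n, star (vdx n) * vdy n
      = ∑ n, star (vdx (σ n)) * vdy (σ n) :=
        (Equiv.sum_comp σ fun n => star (vdx n) * vdy n).symm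
    _ = ∑ n, -(star (vdx n) * vdy n) := by simp only [hvdxσ, hvdyσ, star_neg, neg_mul]
end
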